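/- Assume the LAG setup with ξ_1, …, ξ_D ≥ 0 satisfying Σ_{d=1}^D ξ_d < 1, stepsize α = (1 − Σ_{d=1}^D ξ_d)/L, constants β_d = (Σ_{j=d}^D ξ_j)/(2α) for d = 1, …, D, and arbitrary 𝓛* ∈ ℝ. Then for every k ≥ 1, V^{k+1} − V^k ≤ −(α/2) ‖∇𝓛(θ^k)‖². -/

import Mathlib

open Finset

/-!
A LAG iteration is a gradient step in a direction `G` that only approximates `∇𝓛(θ^k)`.
Combining the quadratic upper bound for smooth functions with the polarization identity gives
`𝓛(θ^{k+1}) - 𝓛(θ^k) ≤ -(α/2) ‖∇𝓛(θ^k)‖² + (α/2) ‖G - ∇𝓛(θ^k)‖² - (α/2) (1 - L α) ‖G‖²`.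
The trigger condition bounds `(α/2) ‖G - ∇𝓛(θ^k)‖²` by `R/(2α)`, where `R` is the `ξ`-weighted
sum of the last `D` squared steps. Since the `β_d` are tail sums of the `ξ_j` divided by `2α`,
summation by parts shows that the remaining part of the Lyapunov function changes by exactly
`((∑ ξ_d) ‖θ^{k+1} - θ^k‖² - R)/(2α)`: this cancels `R/(2α)` and adds
`(α/2) (∑ ξ_d) ‖G‖²`, which the stepsize condition `L α ≤ 1 - ∑ ξ_d` absorbs.
-/

section Smooth

theorem map_add_le_of_norm_fderiv_sub_le {E : Type*} [NormedAddCommGroup E] [NormedSpace ℝ E]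
    {f : E → ℝ} (hf : Differentiable ℝ f) {L : ℝ} {x : E}
    (hL : ∀ y, ‖fderiv ℝ f y - fderiv ℝ f x‖ ≤ L * ‖y - x‖) (v : E) :
    f (x + v) ≤ f x + fderiv ℝ f x v + L / 2 * ‖v‖ ^ 2 := by
  have hline (t : ℝ) : HasDerivAt (fun t : ℝ ↦ f (x + t • v)) (fderiv ℝ f (x + t • v) v) t :=
    (hf _).hasFDerivAt.comp_hasDerivAt t
      (by simpa using ((hasDerivAt_id t).smul_const v).const_add x)
  have hquad (t : ℝ) :
      HasDerivAt (fun t : ℝ ↦ f x + t * fderiv ℝ f x v + L / 2 * ‖v‖ ^ 2 * t ^ 2)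
        (fderiv ℝ f x v + L * ‖v‖ ^ 2 * t) t :=
    ((((hasDerivAt_id t).mul_const (fderiv ℝ f x v)).const_add (f x)).add
      ((hasDerivAt_pow 2 t).const_mul (L / 2 * ‖v‖ ^ 2))).congr_deriv (by simp; ring)
  have hderiv : ∀ t ∈ Set.Ico (0 : ℝ) 1,
      fderiv ℝ f (x + t • v) v ≤ fderiv ℝ f x v + L * ‖v‖ ^ 2 * t := fun t ht ↦ by
    rw [← sub_le_iff_le_add']
    calc fderiv ℝ f (x + t • v) v - fderiv ℝ f x v
        ≤ ‖fderiv ℝ f (x + t • v) - fderiv ℝ f x‖ * ‖v‖ :=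
          (le_abs_self _).trans ((fderiv ℝ f (x + t • v) - fderiv ℝ f x).le_opNorm v)
      _ ≤ L * ‖x + t • v - x‖ * ‖v‖ := by gcongr; exact hL _
      _ = L * ‖v‖ ^ 2 * t := by
          rw [add_sub_cancel_left, norm_smul, Real.norm_of_nonneg ht.1]; ring
  simpa using image_le_of_deriv_right_le_deriv_boundary
    (fun t _ ↦ (hline t).continuousAt.continuousWithinAt) (fun t _ ↦ (hline t).hasDerivWithinAt)
    (by simp) (fun t _ ↦ (hquad t).continuousAt.continuousWithinAt)
    (fun t _ ↦ (hquad t).hasDerivWithinAt) hderiv (Set.right_mem_Icc.2 zero_le_one)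

variable {E : Type*} [NormedAddCommGroup E] [InnerProductSpace ℝ E] [CompleteSpace E]

theorem map_add_le_of_norm_gradient_sub_le {f : E → ℝ} (hf : Differentiable ℝ f) {L : ℝ} {x : E}
    (hL : ∀ y, ‖gradient f y - gradient f x‖ ≤ L * ‖y - x‖) (v : E) :
    f (x + v) ≤ f x + inner ℝ (gradient f x) v + L / 2 * ‖v‖ ^ 2 := by
  rw [inner_gradient_left]
  refine map_add_le_of_norm_fderiv_sub_le hf (fun y ↦ ?_) v
  rw [← toDual_gradient, ← toDual_gradient, ← map_sub, LinearIsometryEquiv.norm_map]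
  exact hL y

theorem map_sub_smul_le_of_norm_gradient_sub_le {f : E → ℝ} (hf : Differentiable ℝ f) {L : ℝ}
    {x : E} (hL : ∀ y, ‖gradient f y - gradient f x‖ ≤ L * ‖y - x‖) (α : ℝ) (G : E) :
    f (x - α • G) ≤ f x - α / 2 * ‖gradient f x‖ ^ 2 + α / 2 * ‖G - gradient f x‖ ^ 2
      - α / 2 * (1 - L * α) * ‖G‖ ^ 2 := by
  have hquad := map_add_le_of_norm_gradient_sub_le hf hL (-(α • G))
  rw [← sub_eq_add_neg, inner_neg_right, inner_smul_right, norm_neg, norm_smul, mul_pow,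
    Real.norm_eq_abs, sq_abs] at hquad
  have hpolar := norm_sub_sq_real G (gradient f x)
  rw [real_inner_comm] at hpolar
  rw [hpolar]
  linarith

end Smooth

section FiniteSums

variable {ι E : Type*}

theorem sq_norm_sum_le_card_sq_mul [SeminormedAddCommGroup E] (s : Finset ι) {f : ι → E} {c : ℝ}
    (h : ∀ i ∈ s, ‖f i‖ ^ 2 ≤ c) : ‖∑ i ∈ s, f i‖ ^ 2 ≤ (#s : ℝ) ^ 2 * c :=
  calc ‖∑ i ∈ s, f i‖ ^ 2
      ≤ (∑ i ∈ s, ‖f i‖) ^ 2 := by gcongr; exact norm_sum_le _ _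
    _ ≤ #s * ∑ i ∈ s, ‖f i‖ ^ 2 := sq_sum_le_card_mul_sum_sq
    _ ≤ #s * (#s * c) := by gcongr; simpa using sum_le_card_nsmul s _ c h
    _ = (#s : ℝ) ^ 2 * c := by ring

variable [NormedAddCommGroup E] [InnerProductSpace ℝ E] [CompleteSpace E]

theorem gradient_fun_sum (s : Finset ι) {f : ι → E → ℝ} {x : E}
    (hf : ∀ i ∈ s, DifferentiableAt ℝ (f i) x) :
    gradient (fun z ↦ ∑ i ∈ s, f i z) x = ∑ i ∈ s, gradient (f i) x := by
  simp only [gradient, fderiv_fun_sum hf, map_sum]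

theorem sq_norm_sum_gradient_sub_gradient_sum_le (s : Finset ι) {f : ι → E → ℝ} {x : E} {y : ι → E}
    {c : ℝ} (hf : ∀ i ∈ s, DifferentiableAt ℝ (f i) x)
    (h : ∀ i ∈ s, ‖gradient (f i) (y i) - gradient (f i) x‖ ^ 2 ≤ c) :
    ‖∑ i ∈ s, gradient (f i) (y i) - gradient (fun z ↦ ∑ i ∈ s, f i z) x‖ ^ 2
      ≤ (#s : ℝ) ^ 2 * c := by
  rw [gradient_fun_sum s hf, ← sum_sub_distrib]
  exact sq_norm_sum_le_card_sq_mul s h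

end FiniteSums

section StepEnergy

theorem sum_Icc_tail_mul_sub {R : Type*} [NonUnitalNonAssocRing R] (w : ℕ → R) (u : ℤ → R)
    (D : ℕ) (k : ℤ) :
    ∑ d ∈ Icc 1 D, (∑ j ∈ Icc d D, w j) * (u (k + 1 - d) - u (k - d))
      = ∑ j ∈ Icc 1 D, w j * (u k - u (k - j)) := by
  have htelescope (j : ℕ) : ∑ d ∈ Icc 1 j, (u (k + 1 - d) - u (k - d)) = u k - u (k - j) := by
    induction j with
    | zero => simp
    | succ j ih =>
      rw [sum_Icc_succ_top (by lia), ih]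
      push_cast
      rw [add_sub_add_right_eq_sub, add_comm, sub_add_sub_cancel']
  simp_rw [sum_mul, ← htelescope, mul_sum]
  exact sum_comm' fun d j ↦ by simp only [mem_Icc]; lia

/-- The weighted sum `∑_{d=1}^D w_d ‖θ^{k+1-d} - θ^{k-d}‖²` of the last `D` squared steps of a
sequence `θ` before time `k`. It is, up to a constant factor, the right-hand side of the LAG
trigger condition (for `w = ξ`), and the memory term of the Lyapunov function (for `w = β`). -/
def stepEnergy {E : Type*} [SeminormedAddCommGroup E] (w : ℕ → ℝ) (D : ℕ) (θ : ℤ → E) (k : ℤ) :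
    ℝ :=
  ∑ d ∈ Icc 1 D, w d * ‖θ (k + 1 - (d : ℤ)) - θ (k - (d : ℤ))‖ ^ 2

variable {E : Type*} [SeminormedAddCommGroup E]

theorem stepEnergy_nonneg {w : ℕ → ℝ} {D : ℕ} (hw : ∀ d ∈ Icc 1 D, 0 ≤ w d) (θ : ℤ → E) (k : ℤ) :
    0 ≤ stepEnergy w D θ k :=
  sum_nonneg fun d hd ↦ mul_nonneg (hw d hd) (sq_nonneg _)

theorem stepEnergy_add_one_sub_of_eq_tail_div {ξ β : ℕ → ℝ} {D : ℕ} {c : ℝ}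
    (hβ : ∀ d ∈ Icc 1 D, β d = (∑ j ∈ Icc d D, ξ j) / c) (θ : ℤ → E) (k : ℤ) :
    stepEnergy β D θ (k + 1) - stepEnergy β D θ k
      = ((∑ d ∈ Icc 1 D, ξ d) * ‖θ (k + 1) - θ k‖ ^ 2 - stepEnergy ξ D θ k) / c := by
  have hparts := sum_Icc_tail_mul_sub ξ (fun i ↦ ‖θ (i + 1) - θ i‖ ^ 2) D k
  simp only [sub_add_eq_add_sub, mul_sub, sum_sub_distrib, ← sum_mul] at hparts
  have htail (i : ℤ) : stepEnergy β D θ i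
      = (∑ d ∈ Icc 1 D, (∑ j ∈ Icc d D, ξ j) * ‖θ (i + 1 - d) - θ (i - d)‖ ^ 2) / c := by
    rw [stepEnergy, sum_div]
    exact sum_congr rfl fun d hd ↦ by rw [hβ d hd, div_mul_eq_mul_div]
  rw [htail, htail, ← sub_div, hparts, stepEnergy]

/-- The Lyapunov function `V^k = F(θ^k) - F* + ∑_{d=1}^D β_d ‖θ^{k+1-d} - θ^{k-d}‖²` of LAG. The
offset `F*` is an arbitrary real number, not necessarily the minimum of `F`. -/
def lagLyapunov (F : E → ℝ) (Fstar : ℝ) (β : ℕ → ℝ) (D : ℕ) (θ : ℤ → E) (k : ℤ) : ℝ :=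
  F (θ k) - Fstar + stepEnergy β D θ k

end StepEnergy

section Lyapunov

variable {E : Type*} [NormedAddCommGroup E] [InnerProductSpace ℝ E] [CompleteSpace E]

theorem lagLyapunov_add_one_sub_le {F : E → ℝ} (hF : Differentiable ℝ F) {L α : ℝ} {D : ℕ}
    {ξ β : ℕ → ℝ} {θ : ℤ → E} {k : ℤ} {G : E}
    (hL : ∀ y, ‖gradient F y - gradient F (θ k)‖ ≤ L * ‖y - θ k‖)
    (hα : 0 < α) (hαL : L * α ≤ 1 - ∑ d ∈ Icc 1 D, ξ d)
    (hβ : ∀ d ∈ Icc 1 D, β d = (∑ j ∈ Icc d D, ξ j) / (2 * α))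
    (hstep : θ (k + 1) = θ k - α • G)
    (hG : ‖G - gradient F (θ k)‖ ^ 2 ≤ stepEnergy ξ D θ k / α ^ 2) (Fstar : ℝ) :
    lagLyapunov F Fstar β D θ (k + 1) - lagLyapunov F Fstar β D θ k
      ≤ -(α / 2) * ‖gradient F (θ k)‖ ^ 2 := by
  set S := ∑ d ∈ Icc 1 D, ξ d
  set R := stepEnergy ξ D θ k
  have hdescent := map_sub_smul_le_of_norm_gradient_sub_le hF hL α G
  have herror : α / 2 * ‖G - gradient F (θ k)‖ ^ 2 ≤ R / (2 * α) :=
    calc α / 2 * ‖G - gradient F (θ k)‖ ^ 2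
        ≤ α / 2 * (R / α ^ 2) := by gcongr
      _ = R / (2 * α) := by field_simp
  have henergy : stepEnergy β D θ (k + 1) - stepEnergy β D θ k
      = α / 2 * S * ‖G‖ ^ 2 - R / (2 * α) := by
    rw [stepEnergy_add_one_sub_of_eq_tail_div hβ, hstep, sub_sub_cancel_left, norm_neg, norm_smul,
      Real.norm_of_nonneg hα.le]
    field
  have habsorb : α / 2 * S * ‖G‖ ^ 2 ≤ α / 2 * (1 - L * α) * ‖G‖ ^ 2 := by
    gcongr
    exact le_sub_comm.1 hαL
  rw [← hstep] at hdescent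
  simp only [lagLyapunov]
  linarith

theorem lag_nonconvex_descent_general {ι : Type*} [Fintype ι] {D : ℕ} {f : ι → E → ℝ}
    (hf : ∀ m, Differentiable ℝ (f m)) {L : ℝ} (hL : 0 < L) {ξ : ℕ → ℝ}
    (hξ : ∀ d ∈ Icc 1 D, 0 ≤ ξ d) {α : ℝ} (hα : 0 < α)
    (hαL : α ≤ (1 - ∑ d ∈ Icc 1 D, ξ d) / L) {β : ℕ → ℝ}
    (hβ : ∀ d ∈ Icc 1 D, β d = (∑ j ∈ Icc d D, ξ j) / (2 * α)) (Fstar : ℝ) {θ : ℤ → E} {k : ℤ}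
    (hsmooth : ∀ y, ‖gradient (fun z ↦ ∑ m, f m z) y - gradient (fun z ↦ ∑ m, f m z) (θ k)‖
      ≤ L * ‖y - θ k‖)
    {Mc : Finset ι} {θhat : ι → E} (hfresh : ∀ m ∉ Mc, θhat m = θ k)
    (hstep : θ (k + 1) = θ k - α • ∑ m, gradient (f m) (θhat m))
    (htrig : ∀ m ∈ Mc, ‖gradient (f m) (θhat m) - gradient (f m) (θ k)‖ ^ 2
      ≤ 1 / (α ^ 2 * (Fintype.card ι : ℝ) ^ 2) * stepEnergy ξ D θ k) :
    lagLyapunov (fun z ↦ ∑ m, f m z) Fstar β D θ (k + 1)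
        - lagLyapunov (fun z ↦ ∑ m, f m z) Fstar β D θ k
      ≤ -(α / 2) * ‖gradient (fun z ↦ ∑ m, f m z) (θ k)‖ ^ 2 := by
  have henergy := stepEnergy_nonneg hξ θ k
  have hlocal (m : ι) : ‖gradient (f m) (θhat m) - gradient (f m) (θ k)‖ ^ 2
      ≤ 1 / (α ^ 2 * (Fintype.card ι : ℝ) ^ 2) * stepEnergy ξ D θ k := by
    by_cases hm : m ∈ Mc
    · exact htrig m hm
    · rw [hfresh m hm, sub_self, norm_zero, zero_pow two_ne_zero]
      positivity
  refine lagLyapunov_add_one_sub_le (Differentiable.fun_sum fun m _ ↦ hf m) hsmooth hα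
    ((le_div_iff₀' hL).1 hαL) hβ hstep ?_ Fstar
  calc ‖∑ m, gradient (f m) (θhat m) - gradient (fun z ↦ ∑ m, f m z) (θ k)‖ ^ 2
      ≤ (Fintype.card ι : ℝ) ^ 2
          * (1 / (α ^ 2 * (Fintype.card ι : ℝ) ^ 2) * stepEnergy ξ D θ k) :=
        sq_norm_sum_gradient_sub_gradient_sum_le univ (fun m _ ↦ hf m (θ k)) fun m _ ↦ hlocal m
    _ = (Fintype.card ι : ℝ) ^ 2 / (Fintype.card ι : ℝ) ^ 2 * (stepEnergy ξ D θ k / α ^ 2) := by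
        ring
    -- only an inequality, because the first factor is `0 / 0 = 0` when `ι` is empty
    _ ≤ stepEnergy ξ D θ k / α ^ 2 := mul_le_of_le_one_left (by positivity) (div_self_le_one _)

end Lyapunov

/-- Key descent inequality in the proof of Proposition 2:
with `α = (1 − Σ_d ξ_d)/L` and `β_d = (Σ_{j=d}^D ξ_j)/(2α)`,
`V^{k+1} − V^k ≤ −(α/2) ‖∇𝓛(θ^k)‖²`. -/
theorem lag_nonconvex_descent {n : ℕ}
    (M D : ℕ) (hM : 1 ≤ M) (hD : 1 ≤ D)
    (Lf : Fin M → EuclideanSpace ℝ (Fin n) → ℝ)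
    (hdiff : ∀ m, Differentiable ℝ (Lf m))
    (L : ℝ) (hL : 0 < L)
    (hsmooth : ∀ x y, ‖gradient (fun z => ∑ m, Lf m z) x
        - gradient (fun z => ∑ m, Lf m z) y‖ ≤ L * ‖x - y‖)
    (ξ : ℕ → ℝ) (hξ : ∀ d ∈ Finset.Icc 1 D, 0 ≤ ξ d)
    (hξsum : ∑ d ∈ Finset.Icc 1 D, ξ d < 1)
    (α : ℝ) (hα : α = (1 - ∑ d ∈ Finset.Icc 1 D, ξ d) / L)
    (β : ℕ → ℝ)
    (hβ : ∀ d ∈ Finset.Icc 1 D, β d = (∑ j ∈ Finset.Icc d D, ξ j) / (2 * α))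
    (Lstar : ℝ)
    (θ : ℤ → EuclideanSpace ℝ (Fin n))
    (hpast : ∀ k : ℤ, k ≤ 1 → θ k = θ 1)
    (Mc : ℤ → Finset (Fin M))
    (θhat : ℤ → Fin M → EuclideanSpace ℝ (Fin n))
    (hhat0 : ∀ m, θhat 0 m = θ 1)
    (hhat : ∀ k : ℤ, 1 ≤ k → ∀ m : Fin M,
      (m ∈ Mc k → θhat k m = θhat (k - 1) m) ∧ (m ∉ Mc k → θhat k m = θ k))
    (hupd : ∀ k : ℤ, 1 ≤ k →
      θ (k + 1) = θ k - α • ∑ m, gradient (Lf m) (θhat k m))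
    (htrig : ∀ k : ℤ, 1 ≤ k → ∀ m ∈ Mc k,
      ‖gradient (Lf m) (θhat k m) - gradient (Lf m) (θ k)‖ ^ 2
        ≤ (1 / (α ^ 2 * (M : ℝ) ^ 2)) *
            ∑ d ∈ Finset.Icc 1 D, ξ d * ‖θ (k + 1 - (d : ℤ)) - θ (k - (d : ℤ))‖ ^ 2)
    (V : ℤ → ℝ)
    (hV : ∀ k : ℤ, V k = (∑ m, Lf m (θ k)) - Lstar
      + ∑ d ∈ Finset.Icc 1 D, β d * ‖θ (k + 1 - (d : ℤ)) - θ (k - (d : ℤ))‖ ^ 2) :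
    ∀ k : ℤ, 1 ≤ k →
      V (k + 1) - V k ≤ -(α / 2) * ‖gradient (fun z => ∑ m, Lf m z) (θ k)‖ ^ 2 := by
  intro k hk
  rw [hV, hV]
  exact lag_nonconvex_descent_general hdiff hL hξ (hα ▸ div_pos (sub_pos.2 hξsum) hL) hα.le hβ
    Lstar (hsmooth · (θ k)) (fun m ↦ (hhat k hk m).2) (hupd k hk)
    (by simpa only [Fintype.card_fin, stepEnergy] using htrig k hk)
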